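/- Let T be a power-bounded operator on a reflexive complex Banach space X, and let λ ∈ ℂ with |λ| = 1. Then λ is an eigenvalue of T (there exists x ≠ 0 with T x = λ x) if and only if λ is an eigenvalue of the adjoint T* (there exists x* ≠ 0 in X* with T* x* = λ x*). -/

import Mathlib

/-- The Banach-space adjoint of `T`, acting on the dual space: `T* f = f ∘ T`. -/
noncomputable def banachAdjoint {𝕜 : Type*} [RCLike 𝕜] {X : Type*} [NormedAddCommGroup X]
    [NormedSpace 𝕜 X] (T : X →L[𝕜] X) :
    StrongDual 𝕜 X →L[𝕜] StrongDual 𝕜 X :=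
  (ContinuousLinearMap.compL 𝕜 X X 𝕜).flip T

/-!
After rescaling, the eigenvalue is `1`. If `T` is power-bounded, the Cesàro means of the powers
of `T` are uniformly bounded; they fix the fixed points of `T` and tend to zero on the range of
`T - 1`, so no nonzero fixed point lies in the closure of that range. By Hahn–Banach, a nonzero
fixed point is therefore detected by a functional vanishing on the range of `T - 1`, and such
functionals are exactly the fixed points of `T*`. For the converse, apply this to `T*`: by
reflexivity, the eigenvector of `T**` so obtained comes from a vector of `X`.
-/

open Filter Function
open scoped Topology

/-- An element of a normed monoid is power-bounded if its powers are uniformly bounded in norm.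
For an operator on a Banach space, the norm is the operator norm. -/
def IsPowerBounded {A : Type*} [Monoid A] [Norm A] (a : A) : Prop :=
  ∃ C : ℝ, ∀ n : ℕ, ‖a ^ n‖ ≤ C

theorem IsPowerBounded.smul {𝕜 A : Type*} [NormedField 𝕜] [SeminormedRing A] [NormedAlgebra 𝕜 A]
    {a : A} (ha : IsPowerBounded a) {c : 𝕜} (hc : ‖c‖ ≤ 1) : IsPowerBounded (c • a) := by
  obtain ⟨C, hC⟩ := ha
  refine ⟨C, fun n ↦ ?_⟩
  calc ‖(c • a) ^ n‖ = ‖c‖ ^ n * ‖a ^ n‖ := by rw [smul_pow, norm_smul, norm_pow]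
    _ ≤ ‖a ^ n‖ := mul_le_of_le_one_left (norm_nonneg _) (pow_le_one₀ (norm_nonneg _) hc)
    _ ≤ C := hC n

theorem birkhoffAverage_id_sub (R : Type*) {M F : Type*} [DivisionRing R] [AddCommGroup M]
    [Module R M] [FunLike F M M] [AddMonoidHomClass F M M] (f : F) (n : ℕ) (x y : M) :
    birkhoffAverage R f id n (x - y) =
      birkhoffAverage R f id n x - birkhoffAverage R f id n y := by
  simp only [birkhoffAverage, birkhoffSum, id_eq, iterate_map_sub, Finset.sum_sub_distrib, smul_sub]

section Seminormed

variable {𝕜 : Type*} [RCLike 𝕜] {X : Type*} [SeminormedAddCommGroup X] [NormedSpace 𝕜 X]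

theorem exists_dual_le_ker_of_notMem_topologicalClosure {p : Submodule 𝕜 X} {x : X}
    (hx : x ∉ p.topologicalClosure) : ∃ f : StrongDual 𝕜 X, f x ≠ 0 ∧ p ≤ f.ker := by
  let q := p.topologicalClosure
  have : IsClosed (q : Set X) := p.isClosed_topologicalClosure
  have hqx : q.mkQL x ≠ 0 := by simpa [q] using hx
  obtain ⟨g, hg⟩ := SeparatingDual.exists_ne_zero (R := 𝕜) hqx
  refine ⟨g.comp q.mkQL, hg, fun y hy ↦ ?_⟩
  have hqy : q.mkQL y = 0 := by simpa [q] using p.le_topologicalClosure hy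
  exact (congrArg g hqy).trans (map_zero g)

variable {T : X →L[𝕜] X}

theorem norm_iterate_le_of_norm_pow_le {C : ℝ} (hC : ∀ n : ℕ, ‖T ^ n‖ ≤ C) (n : ℕ) (x : X) :
    ‖T^[n] x‖ ≤ C * ‖x‖ := by
  simpa only [FunLike.coe_pow_eq_iterate] using (T ^ n).le_of_opNorm_le (hC n) x

theorem norm_birkhoffAverage_id_le_of_norm_pow_le {C : ℝ} (hC : ∀ n : ℕ, ‖T ^ n‖ ≤ C) (n : ℕ)
    (x : X) : ‖birkhoffAverage 𝕜 T id n x‖ ≤ C * ‖x‖ := by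
  have hsum : ‖birkhoffSum T id n x‖ ≤ n * (C * ‖x‖) := by
    simpa [birkhoffSum] using
      norm_sum_le_of_le (Finset.range n) fun k _ ↦ norm_iterate_le_of_norm_pow_le hC k x
  have hC₀ : 0 ≤ C * ‖x‖ := (norm_nonneg _).trans (norm_iterate_le_of_norm_pow_le hC 0 x)
  rw [birkhoffAverage, norm_smul, norm_inv, RCLike.norm_natCast]
  exact inv_mul_le_of_le_mul₀ n.cast_nonneg hC₀ hsum

end Seminormed

section Normed

variable {𝕜 : Type*} [RCLike 𝕜] {X : Type*} [NormedAddCommGroup X] [NormedSpace 𝕜 X] {T : X →L[𝕜] X}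

theorem norm_le_mul_norm_sub_of_isFixedPt {C : ℝ} (hC : ∀ n : ℕ, ‖T ^ n‖ ≤ C) {x : X}
    (hx : IsFixedPt T x) (y : X) : ‖x‖ ≤ C * ‖x - (T y - y)‖ := by
  have horbit : Bornology.IsBounded (Set.range (id <| T^[·] y)) :=
    isBounded_iff_forall_norm_le.2
      ⟨C * ‖y‖, Set.forall_mem_range.2 (norm_iterate_le_of_norm_pow_le hC · y)⟩
  have hlim : Tendsto (birkhoffAverage 𝕜 T id · (x - (T y - y))) atTop (𝓝 x) := by
    simpa only [birkhoffAverage_id_sub, id_eq, sub_zero] using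
      (hx.tendsto_birkhoffAverage 𝕜 id).sub
        (tendsto_birkhoffAverage_apply_sub_birkhoffAverage 𝕜 horbit)
  exact le_of_tendsto' hlim.norm fun n ↦ norm_birkhoffAverage_id_le_of_norm_pow_le hC n _

theorem IsPowerBounded.disjoint_ker_topologicalClosure_range (hT : IsPowerBounded T) :
    Disjoint (T - 1).ker (T - 1).range.topologicalClosure := by
  obtain ⟨C, hC⟩ := hT
  rw [Submodule.disjoint_def]
  intro x hker hclosure
  have hfix : IsFixedPt T x := by simpa [IsFixedPt, sub_eq_zero] using hker
  have hle : ∀ z ∈ closure ((T - 1).range : Set X), ‖x‖ ≤ C * ‖x - z‖ := by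
    have hclosed : IsClosed {z | ‖x‖ ≤ C * ‖x - z‖} :=
      isClosed_le continuous_const (by fun_prop)
    refine closure_minimal ?_ hclosed
    rintro _ ⟨y, rfl⟩
    exact norm_le_mul_norm_sub_of_isFixedPt hC hfix y
  simpa using hle x hclosure

theorem banachAdjoint_smul (c : 𝕜) (T : X →L[𝕜] X) :
    banachAdjoint (c • T) = c • banachAdjoint T :=
  map_smul _ c T

theorem banachAdjoint_pow (T : X →L[𝕜] X) (n : ℕ) :
    banachAdjoint T ^ n = banachAdjoint (T ^ n) := by
  induction n with
  | zero => rfl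
  | succ n ih => rw [pow_succ, ih, pow_succ']; rfl

theorem norm_banachAdjoint_le (T : X →L[𝕜] X) : ‖banachAdjoint T‖ ≤ ‖T‖ :=
  ContinuousLinearMap.opNorm_le_bound _ (norm_nonneg T) fun f ↦
    (f.opNorm_comp_le T).trans_eq (mul_comm _ _)

protected theorem IsPowerBounded.banachAdjoint (hT : IsPowerBounded T) :
    IsPowerBounded (banachAdjoint T) := by
  obtain ⟨C, hC⟩ := hT
  refine ⟨C, fun n ↦ ?_⟩
  rw [banachAdjoint_pow]
  exact (norm_banachAdjoint_le _).trans (hC n)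

theorem IsPowerBounded.exists_isFixedPt_banachAdjoint (hT : IsPowerBounded T) {x : X}
    (hx : x ≠ 0) (hfix : IsFixedPt T x) :
    ∃ f : StrongDual 𝕜 X, f x ≠ 0 ∧ IsFixedPt (banachAdjoint T) f := by
  have hker : x ∈ (T - 1).ker := by simpa [IsFixedPt, sub_eq_zero] using hfix
  have hclosure : x ∉ (T - 1).range.topologicalClosure := fun h ↦
    hx (Submodule.disjoint_def.1 hT.disjoint_ker_topologicalClosure_range x hker h)
  obtain ⟨f, hfx, hf⟩ := exists_dual_le_ker_of_notMem_topologicalClosure hclosure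
  refine ⟨f, hfx, ContinuousLinearMap.ext fun y ↦ ?_⟩
  have hfy : f (T y - y) = 0 := hf ⟨y, rfl⟩
  rwa [map_sub, sub_eq_zero] at hfy

theorem exists_isFixedPt_banachAdjoint_iff
    (hrefl : Surjective (NormedSpace.inclusionInDoubleDual 𝕜 X)) (hT : IsPowerBounded T) :
    (∃ x : X, x ≠ 0 ∧ IsFixedPt T x) ↔
      ∃ f : StrongDual 𝕜 X, f ≠ 0 ∧ IsFixedPt (banachAdjoint T) f := by
  constructor
  · rintro ⟨x, hx, hfix⟩
    obtain ⟨f, hfx, hf⟩ := hT.exists_isFixedPt_banachAdjoint hx hfix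
    exact ⟨f, fun h ↦ hfx (by simp [h]), hf⟩
  · rintro ⟨f, hf, hfix⟩
    obtain ⟨φ, hφf, hφ⟩ := hT.banachAdjoint.exists_isFixedPt_banachAdjoint hf hfix
    obtain ⟨x, rfl⟩ := hrefl φ
    refine ⟨x, fun h ↦ hφf (by simp [h]), ?_⟩
    exact (SeparatingDual.eq_iff_forall_dual_eq (R := 𝕜)).2 fun g ↦ DFunLike.congr_fun hφ g

theorem unimodular_eigenvalue_iff_adjoint_eigenvalue_general
    (hrefl : Surjective (NormedSpace.inclusionInDoubleDual 𝕜 X))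
    (T : X →L[𝕜] X) {lam : 𝕜} (hlam : lam ≠ 0) (hT : IsPowerBounded (lam⁻¹ • T)) :
    (∃ x : X, x ≠ 0 ∧ T x = lam • x) ↔
      ∃ f : StrongDual 𝕜 X, f ≠ 0 ∧ banachAdjoint T f = lam • f := by
  simpa only [IsFixedPt, banachAdjoint_smul, smul_apply, inv_smul_eq_iff₀ hlam] using
    exists_isFixedPt_banachAdjoint_iff hrefl hT

end Normed

/-- Let `T` be a power-bounded operator on a reflexive complex Banach
space `X` and let `λ ∈ ℂ` with `|λ| = 1`. Then `λ` is an eigenvalue of `T` if and only if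
`λ` is an eigenvalue of the adjoint `T*`. -/
theorem unimodular_eigenvalue_iff_adjoint_eigenvalue
    {X : Type*} [NormedAddCommGroup X] [NormedSpace ℂ X] [CompleteSpace X]
    (hrefl : Function.Bijective (NormedSpace.inclusionInDoubleDual ℂ X))
    (T : X →L[ℂ] X) (hpb : ∃ C : ℝ, ∀ n : ℕ, ‖T ^ n‖ ≤ C)
    (lam : ℂ) (hlam : ‖lam‖ = 1) :
    (∃ x : X, x ≠ 0 ∧ T x = lam • x) ↔
    (∃ f : StrongDual ℂ X, f ≠ 0 ∧ banachAdjoint T f = lam • f) :=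
  unimodular_eigenvalue_iff_adjoint_eigenvalue_general hrefl.surjective T
    (norm_ne_zero_iff.1 (by simp [hlam])) (IsPowerBounded.smul hpb (by simp [hlam]))
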